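/- arXiv:math/0111002 — 3 statements merged into one kernel-verified Lean document; each statement's English description precedes it below -/
import Mathlib

section
/- For any semigroup G, the space LO(G) of left orders on G is compact. -/
/-!
Compactness is checked on ultrafilters. An ultrafilter `F` on `LO(G)` has as its limit the relation
under which `a` is below `b` when `a < b` holds for `F`-almost every left order `<`.
This ultralimit is again a left order: irreflexivity,
transitivity and left invariance pass to it because `F` is a filter, and trichotomy because an
ultrafilter containing a finite union contains one of its members. By construction every
subbasic open set `U_{a,b}` around the limit belongs to `F`.
-/

open Classical

/-- A left order on a semigroup: a strict linear (total) order `r` such that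
`r a b` implies `r (c*a) (c*b)` for all `c`. -/
def IsLeftOrder {G : Type*} [Mul G] (r : G → G → Prop) : Prop :=
  IsStrictTotalOrder G r ∧ ∀ a b c : G, r a b → r (c * a) (c * b)

/-- The set `LO(G)` of left orders on `G`. -/
def LeftOrder (G : Type*) [Mul G] : Type _ :=
  {r : G → G → Prop // IsLeftOrder r}

/-- `U_{a,b}` is the set of left orders `<` with `a < b`. -/
def UU {G : Type*} [Mul G] (a b : G) : Set (LeftOrder G) := {r | r.1 a b}

/-- `LO(G)` carries the smallest topology in which every `U_{a,b}` is open. -/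
instance {G : Type*} [Mul G] : TopologicalSpace (LeftOrder G) :=
  TopologicalSpace.generateFrom {s | ∃ a b : G, s = UU a b}

theorem isLeftOrder_ultralimit {G : Type*} [Mul G] (F : Ultrafilter (LeftOrder G)) :
    IsLeftOrder (fun a b : G => UU a b ∈ F) := by
  have hirr : ∀ a : G, UU a a ∉ F := by
    intro a h
    obtain ⟨r, hr⟩ := F.nonempty_of_mem h
    have := r.2.1
    exact irrefl_of r.1 a hr
  have htrans : ∀ a b c : G, UU a b ∈ F → UU b c ∈ F → UU a c ∈ F := by
    intro a b c hab hbc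
    filter_upwards [hab, hbc] with r h₁ h₂
    have := r.2.1
    exact trans_of r.1 h₁ h₂
  have htri : ∀ a b : G, UU a b ∉ F → UU b a ∉ F → a = b := by
    intro a b hab hba
    by_contra hne
    have hunion : UU a b ∪ UU b a ∈ F := by
      filter_upwards with r
      have := r.2.1
      rcases trichotomous_of r.1 a b with h | h | h
      · exact Or.inl h
      · exact absurd h hne
      · exact Or.inr h
    exact (Ultrafilter.union_mem_iff.1 hunion).elim hab hba
  refine ⟨{ trichotomous := htri, irrefl := hirr, trans := htrans }, fun a b c hab => ?_⟩
  filter_upwards [hab] with r hr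
  exact r.2.2 a b c hr

/-- For any semigroup `G`, the space `LO(G)` of left orders on `G` is compact. -/
theorem stmt4 {G : Type*} [Semigroup G] : CompactSpace (LeftOrder G) := by
  refine ⟨isCompact_iff_ultrafilter_le_nhds.2 fun F _ => ?_⟩
  let L : LeftOrder G := ⟨_, isLeftOrder_ultralimit F⟩
  refine ⟨L, Set.mem_univ _,
    le_of_le_of_eq ?_ (TopologicalSpace.nhds_generateFrom (a := L)).symm⟩
  refine le_iInf₂ fun s hs => Filter.le_principal_iff.2 ?_
  obtain ⟨hmem, a, b, rfl⟩ := hs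
  -- membership of `L` in `U_{a,b}` unfolds to `U_{a,b} ∈ F`
  exact hmem
end

section
/- Let G be a countable semigroup. Then LO(G) is homeomorphic to the Cantor set (equivalently, to the Cantor space ℕ → Bool) if and only if (1) LO(G) is nonempty, and (2) for every finite sequence of pairs (a₁,b₁), ..., (aₙ,bₙ) of elements of G, the set U_{a₁,b₁} ∩ ... ∩ U_{aₙ,bₙ} is either empty or infinite. -/
/-!
The space `LO(G)` is compact (an ultrafilter `F` of left orders converges to the left order
`a < b ↔ F`-almost every order puts `a` below `b`), and each `U_{a,b}` is clopen, because its
complement is `U_{b,a}` when `a ≠ b` and everything when `a = b`. Enumerating `G × G`, one gets a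
sequence of continuous functions `e i : LO(G) → Bool` that separates points, and condition (2) says
that no cylinder of this sequence is a single point: a cylinder is a finite intersection of sets
`U_{a,b}`.

The heart of the matter is then a form of Brouwer's theorem (`nonempty_homeomorph_cantor`). Call `m`
a splitting level of `x` if some `y` agrees with `x` on all coordinates below `m` but not on `m`.
If no cylinder is a singleton, every point has infinitely many splitting levels, and `x` is sent to
the sequence of its coordinates at these levels. Whether `m` is a splitting level of `x` depends
only on the coordinates of `x` below `m`, so the map is continuous; it is injective since the first
difference of two points is a splitting level of both, with the same index; it has dense image since
at each splitting level one can choose the coordinate freely. By compactness it is a homeomorphism.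

Conversely a nonempty open subset of `ℕ → Bool` is infinite, and finite intersections of the
`U_{a,b}` are open.
-/

open Classical

section Splitting

variable {X : Type*} (e : ℕ → X → Bool)

/-- `m` is a splitting level of `x` for the coordinates `e`: some point has the same coordinates as
`x` below `m`, but a different `m`-th coordinate. -/
def Splits (x : X) (m : ℕ) : Prop :=
  ∃ y, (∀ i < m, e i y = e i x) ∧ e m y ≠ e m x

/-- The sequence of coordinates of `x` at its successive splitting levels. -/
noncomputable def splitCode (x : X) (n : ℕ) : Bool :=
  e (Nat.nth (Splits e x) n) x

variable {e}

lemma Splits.congr {x y : X} {m : ℕ} (h : ∀ i < m, e i x = e i y) (hs : Splits e x m) :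
    Splits e y m := by
  by_cases hm : e m x = e m y
  · obtain ⟨z, hz, hz'⟩ := hs
    exact ⟨z, fun i hi => (hz i hi).trans (h i hi), hm ▸ hz'⟩
  · exact ⟨x, h, hm⟩

lemma splits_iff {x y : X} {m : ℕ} (h : ∀ i < m, e i x = e i y) :
    Splits e x m ↔ Splits e y m :=
  ⟨Splits.congr h, Splits.congr fun i hi => (h i hi).symm⟩

variable (hinf : ∀ x N, ∃ y, y ≠ x ∧ ∀ i < N, e i y = e i x)
  (hsep : ∀ x y, (∀ i, e i x = e i y) → x = y)

include hinf hsep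

lemma infinite_splits (x : X) : (Set.ofPred (Splits e x)).Infinite := by
  refine Set.infinite_of_forall_exists_gt fun N => ?_
  obtain ⟨y, hne, hy⟩ := hinf x (N + 1)
  have hex : ∃ m, e m y ≠ e m x := by
    by_contra! h
    exact hne (hsep _ _ h)
  refine ⟨Nat.find hex, ⟨y, fun i hi => ?_, Nat.find_spec hex⟩, ?_⟩
  · simpa using Nat.find_min hex hi
  · by_contra! h
    exact Nat.find_spec hex (hy _ (by omega))

/-- Points with the same coordinates below the `k`-th splitting level of one of them have the same
`k`-th splitting level. -/
lemma nth_splits_congr {x y : X} {k : ℕ}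
    (h : ∀ i < Nat.nth (Splits e x) k, e i x = e i y) :
    Nat.nth (Splits e y) k = Nat.nth (Splits e x) k := by
  set m := Nat.nth (Splits e x) k with hm
  have hx := infinite_splits hinf hsep x
  have hsx : Splits e x m := Nat.nth_mem_of_infinite hx k
  have hsy : Splits e y m := (splits_iff h).1 hsx
  have hc : Nat.count (Splits e y) m = k := by
    rw [← Nat.count_nth_of_infinite hx k, ← hm, Nat.count_eq_card_filter_range,
      Nat.count_eq_card_filter_range]
    congr 1
    refine Finset.filter_congr fun i hi => ?_
    exact (splits_iff fun j hj => h j (hj.trans (Finset.mem_range.1 hi))).symm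
  rw [← hc, Nat.nth_count hsy]

lemma splitCode_injective : Function.Injective (splitCode e) := by
  intro x y hxy
  by_contra hne
  have hex : ∃ m, e m x ≠ e m y := by
    by_contra! h
    exact hne (hsep _ _ h)
  have hlt : ∀ i < Nat.find hex, e i x = e i y := fun i hi => by
    simpa using Nat.find_min hex hi
  have hs : Splits e x (Nat.find hex) :=
    ⟨y, fun i hi => (hlt i hi).symm, (Nat.find_spec hex).symm⟩
  have hnx := Nat.nth_count hs
  have hny := nth_splits_congr hinf hsep (x := x) (y := y)
    (k := Nat.count (Splits e x) (Nat.find hex)) (by rw [hnx]; exact hlt)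
  have := congrFun hxy (Nat.count (Splits e x) (Nat.find hex))
  unfold splitCode at this
  rw [hny, hnx] at this
  exact Nat.find_spec hex this

lemma exists_splitCode_eq_below [Nonempty X] (s : ℕ → Bool) (n : ℕ) :
    ∃ x, ∀ k < n, splitCode e x k = s k := by
  induction n with
  | zero => exact ⟨Classical.arbitrary X, by simp⟩
  | succ n ih =>
    obtain ⟨x, hx⟩ := ih
    have hinfx := infinite_splits hinf hsep x
    by_cases hn : splitCode e x n = s n
    · exact ⟨x, fun k hk => (Nat.lt_succ_iff_lt_or_eq.1 hk).elim (hx k) (fun h => h ▸ hn)⟩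
    -- The point witnessing that the `n`-th level splits has the required `n`-th coordinate.
    obtain ⟨y, hy, hy'⟩ : Splits e x (Nat.nth (Splits e x) n) :=
      Nat.nth_mem_of_infinite hinfx n
    refine ⟨y, fun k hk => ?_⟩
    have hle : Nat.nth (Splits e x) k ≤ Nat.nth (Splits e x) n :=
      (Nat.nth_monotone hinfx) (by omega)
    have hnk := nth_splits_congr hinf hsep (x := x) (y := y) (k := k)
      fun i hi => (hy i (hi.trans_le hle)).symm
    unfold splitCode at hx hn ⊢
    rw [hnk]
    rcases Nat.lt_succ_iff_lt_or_eq.1 hk with hk | rfl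
    · rw [hy _ (Nat.nth_strictMono hinfx hk), hx k hk]
    · revert hy' hn
      cases e (Nat.nth (Splits e x) k) y <;> cases e (Nat.nth (Splits e x) k) x <;>
        cases s k <;> simp

variable [TopologicalSpace X] (hcont : ∀ i, Continuous (e i))

include hcont

lemma continuous_splitCode : Continuous (splitCode e) := by
  refine continuous_pi fun n => continuous_iff_continuousAt.2 fun x => ?_
  have hev : ∀ᶠ y in nhds x, ∀ i ∈ Set.Iic (Nat.nth (Splits e x) n), e i y = e i x := by
    refine (Filter.eventually_all_finite (Set.finite_Iic _)).2 fun i _ => ?_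
    exact (hcont i).continuousAt (show {e i x} ∈ nhds (e i x) by simp)
  refine tendsto_const_nhds.congr' (hev.mono fun y hy => ?_)
  have hnk := nth_splits_congr hinf hsep (x := x) (y := y) (k := n)
    fun i hi => (hy i hi.le).symm
  change e _ x = e _ y
  rw [hnk, hy _ (Set.mem_Iic.2 le_rfl)]

/-- A nonempty compact space with a separating sequence of continuous `Bool`-valued coordinates,
none of whose cylinders is a singleton, is homeomorphic to the Cantor space. -/
theorem nonempty_homeomorph_cantor [CompactSpace X] [Nonempty X] :
    Nonempty (X ≃ₜ (ℕ → Bool)) := by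
  have hc := continuous_splitCode hinf hsep hcont
  have hsurj : Function.Surjective (splitCode e) := by
    intro s
    choose x hx using exists_splitCode_eq_below hinf hsep s
    have hlim : Filter.Tendsto (fun n => splitCode e (x n)) Filter.atTop (nhds s) := by
      refine tendsto_pi_nhds.2 fun k => tendsto_const_nhds.congr' ?_
      filter_upwards [Filter.eventually_gt_atTop k] with n hn
      exact (hx n k hn).symm
    exact (isCompact_range hc).isClosed.mem_of_tendsto hlim
      (Filter.Eventually.of_forall fun n => Set.mem_range_self _)
  exact ⟨Continuous.homeoOfEquivCompactToT2
    (f := Equiv.ofBijective _ ⟨splitCode_injective hinf hsep, hsurj⟩) hc⟩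

end Splitting

lemma cantor_infinite_of_isOpen {V : Set (ℕ → Bool)} (hV : IsOpen V) (hne : V.Nonempty) :
    V.Infinite := by
  obtain ⟨x, hx⟩ := hne
  -- Flipping the `n`-th coordinate of `x` gives distinct points converging to `x`.
  let f : ℕ → ℕ → Bool := fun n => Function.update x n (!x n)
  have hf : Function.Injective f := by
    intro m n hmn
    by_contra h
    have := congrFun hmn m
    simp [f, Function.update_of_ne h] at this
  have hlim : Filter.Tendsto f Filter.atTop (nhds x) := by
    refine tendsto_pi_nhds.2 fun k => tendsto_const_nhds.congr' ?_
    filter_upwards [Filter.eventually_gt_atTop k] with n hn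
    simp [f, Function.update_of_ne hn.ne]
  have hev : ∀ᶠ n in Filter.atTop, f n ∈ V := hlim (hV.mem_nhds hx)
  intro hfin
  exact (Nat.frequently_atTop_iff_infinite.1 hev.frequently) (hfin.preimage hf.injOn)

section LeftOrder

variable {G : Type*} [Mul G]

lemma LeftOrder.irrefl (r : LeftOrder G) (a : G) : ¬ r.1 a a :=
  r.2.1.toIsStrictOrder.toIrrefl.irrefl a

lemma LeftOrder.asymm (r : LeftOrder G) {a b : G} (h : r.1 a b) : ¬ r.1 b a := fun h' =>
  r.irrefl a (r.2.1.toIsStrictOrder.toIsTrans.trans _ _ _ h h')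

lemma LeftOrder.total (r : LeftOrder G) {a b : G} (h : a ≠ b) : r.1 a b ∨ r.1 b a := by
  by_contra! h'
  exact h (r.2.1.toTrichotomous.trichotomous a b h'.1 h'.2)

lemma isOpen_UU (a b : G) : IsOpen (UU a b) :=
  TopologicalSpace.isOpen_generateFrom_of_mem ⟨a, b, rfl⟩

lemma isClopen_UU (a b : G) : IsClopen (UU a b) := by
  refine ⟨⟨?_⟩, isOpen_UU a b⟩
  by_cases h : a = b
  · have : (UU a b)ᶜ = Set.univ := by
      subst h
      exact Set.eq_univ_of_forall fun r => r.irrefl a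
    rw [this]
    exact isOpen_univ
  · have : (UU a b)ᶜ = UU b a := by
      ext r
      exact ⟨fun hr => (r.total h).resolve_left hr, fun hr => r.asymm hr⟩
    rw [this]
    exact isOpen_UU b a

instance : CompactSpace (LeftOrder G) := by
  refine ⟨isCompact_iff_ultrafilter_le_nhds.2 fun F _ => ?_⟩
  have hr : IsLeftOrder fun a b : G => ∀ᶠ x in (F : Filter (LeftOrder G)), x.1 a b := by
    refine ⟨?_, fun a b c h => h.mono fun x hx => x.2.2 a b c hx⟩
    refine { trichotomous := fun a b h h' => ?_, irrefl := fun a h => ?_,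
             trans := fun a b c h h' => ?_ }
    · by_contra hab
      have : ∀ᶠ x in (F : Filter (LeftOrder G)), x.1 a b ∨ x.1 b a :=
        Filter.Eventually.of_forall fun x => x.total hab
      exact (Ultrafilter.eventually_or.1 this).elim h h'
    · obtain ⟨x, hx⟩ := h.exists
      exact x.irrefl a hx
    · filter_upwards [h, h'] with x hx hx'
      exact x.2.1.toIsStrictOrder.toIsTrans.trans _ _ _ hx hx'
  refine ⟨⟨_, hr⟩, Set.mem_univ _, ?_⟩
  refine le_trans ?_ TopologicalSpace.nhds_generateFrom.ge
  refine le_iInf₂ fun s hs => Filter.le_principal_iff.2 ?_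
  obtain ⟨hmem, a, b, rfl⟩ := hs
  exact hmem

end LeftOrder

/-- For a countable semigroup `G`, the space `LO(G)` is homeomorphic to the
Cantor space `ℕ → Bool` iff (1) `LO(G)` is nonempty and (2) every finite
intersection `U_{a₁,b₁} ∩ ... ∩ U_{aₙ,bₙ}` is empty or infinite. -/
theorem stmt6 {G : Type*} [Semigroup G] [Countable G] :
    Nonempty (LeftOrder G ≃ₜ (ℕ → Bool)) ↔
      (Nonempty (LeftOrder G) ∧
        ∀ l : List (G × G),
          (⋂ p ∈ l, UU p.1 p.2) = ∅ ∨ (⋂ p ∈ l, UU p.1 p.2).Infinite) := by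
  constructor
  · rintro ⟨φ⟩
    refine ⟨⟨φ.symm fun _ => true⟩, fun l => ?_⟩
    rcases (⋂ p ∈ l, UU p.1 p.2 : Set (LeftOrder G)).eq_empty_or_nonempty with h | h
    · exact Or.inl h
    right
    have hopen : IsOpen (⋂ p ∈ l, UU p.1 p.2 : Set (LeftOrder G)) :=
      (l.finite_toSet).isOpen_biInter fun p _ => isOpen_UU p.1 p.2
    exact (cantor_infinite_of_isOpen (φ.isOpenMap _ hopen) (h.image φ)).of_image φ
  · rintro ⟨hne, hl⟩
    rcases isEmpty_or_nonempty G with hG | hG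
    · -- On the empty semigroup there is only one order, contradicting (2) for the empty list.
      exfalso
      have : Subsingleton (LeftOrder G) :=
        ⟨fun r s => Subtype.ext (funext fun a => (hG.false a).elim)⟩
      rcases hl [] with h | h
      · exact Set.notMem_empty hne.some (h ▸ by simp)
      · exact h (Set.toFinite _)
    obtain ⟨p, hp⟩ := exists_surjective_nat (G × G)
    refine nonempty_homeomorph_cantor
      (e := fun i (r : LeftOrder G) => decide (r.1 (p i).1 (p i).2)) ?_ ?_ ?_
    · intro x N
      -- Listing both `p i` and its swap turns the equality of the `i`-th coordinates, which may
      -- both be `false`, into conditions of the form `a < b`.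
      let l : List (G × G) := ((List.range N).flatMap fun i => [p i, (p i).swap]).filter
        fun q => decide (x.1 q.1 q.2)
      have hx : x ∈ (⋂ q ∈ l, UU q.1 q.2 : Set (LeftOrder G)) := by
        refine Set.mem_iInter₂.2 fun q hq => ?_
        exact of_decide_eq_true (List.mem_filter.1 hq).2
      have hinf := (hl l).resolve_left (Set.nonempty_iff_ne_empty.1 ⟨x, hx⟩)
      obtain ⟨y, hy, hyx⟩ := hinf.nontrivial.exists_ne x
      refine ⟨y, hyx, fun i hi => ?_⟩
      have key : ∀ q : G × G, (q = p i ∨ q = (p i).swap) → x.1 q.1 q.2 → y.1 q.1 q.2 := by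
        intro q hq hxq
        refine Set.mem_iInter₂.1 hy q (List.mem_filter.2 ⟨?_, by simpa using hxq⟩)
        exact List.mem_flatMap.2 ⟨i, List.mem_range.2 hi, by simpa using hq⟩
      refine decide_eq_decide.2 ⟨fun h => ?_, key _ (Or.inl rfl)⟩
      by_contra hxi
      have hpi : (p i).1 ≠ (p i).2 := fun heq => y.irrefl (p i).2 (by rwa [heq] at h)
      exact y.asymm h (key _ (Or.inr rfl) ((x.total hpi).resolve_left hxi))
    · intro x y h
      refine Subtype.ext (funext fun a => funext fun b => propext ?_)
      obtain ⟨i, hi⟩ := hp (a, b)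
      simpa [hi] using h i
    · intro i
      exact (continuous_bool_rng true).2 (by
        convert isClopen_UU (p i).1 (p i).2 using 1
        ext r
        simp [UU])
end

section
/- Let < be a translation-invariant linear order on the group ℤⁿ (n ≥ 1), i.e., a < b implies a + c < b + c for all a, b, c ∈ ℤⁿ. Then there exists a nonzero linear functional φ : ℝⁿ → ℝ such that for every v ∈ ℤⁿ: if φ(v) > 0 then 0 < v, and if φ(v) < 0 then v < 0. -/
/-!
The nonnegative elements of `(ℤⁿ, <)` form a submonoid `S` with `S ∪ -S = ℤⁿ` and `S ∩ -S = 0`,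
and it suffices to find a nonzero functional that is nonnegative on `S`.

Each coordinate axis has a sign `s i = ±1` with `s i • eᵢ ∈ S`. Let `O` be the open orthant given by
these signs, and let `Q` be the sum of `O` and the rational cone spanned by `S`; clearing
denominators, `Q = {x | ∃ N ≥ 1, ∃ v ∈ S, N x - v ∈ O}` (`thickCone`). The set `Q` is open and
closed under addition, and it is also closed under scaling by positive *reals*: the room in the open
set `O` absorbs the error of replacing a real scalar by a rational one (`smul_mem_thickCone`).
So `Q` is convex. It does not contain `0`, because an integer vector `-v ∈ O` is a natural
combination of the `s i • eᵢ`, so it lies in `S`, which forces `v = 0`. Hahn–Banach gives a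
functional that is positive on `Q`; it is nonnegative on `S` since `S` lies in the closure of `Q`.
-/

/-- The vector of `ℝⁿ` underlying a lattice vector. -/
def latticeVec {n : ℕ} (v : Fin n → ℤ) : Fin n → ℝ := fun i => (v i : ℝ)

/-- The open orthant of `ℝⁿ` with sign vector `s`. -/
def openOrthant {n : ℕ} (s : Fin n → ℤ) : Set (Fin n → ℝ) := {x | ∀ i, 0 < (s i : ℝ) * x i}

/-- The sum of the open orthant with signs `s` and the rational cone spanned by `S`, with
denominators cleared. -/
def thickCone {n : ℕ} (S : AddSubmonoid (Fin n → ℤ)) (s : Fin n → ℤ) : Set (Fin n → ℝ) :=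
  {x | ∃ N : ℕ, 0 < N ∧ ∃ v ∈ S, (N : ℝ) • x - latticeVec v ∈ openOrthant s}

lemma isOpen_openOrthant {n : ℕ} (s : Fin n → ℤ) : IsOpen (openOrthant s) := by
  simp only [openOrthant, Set.ofPred_forall]
  exact isOpen_iInter_of_finite fun i => isOpen_lt (by fun_prop) (by fun_prop)

lemma smul_mem_openOrthant {n : ℕ} {s : Fin n → ℤ} {c : ℝ} (hc : 0 < c) {x : Fin n → ℝ}
    (hx : x ∈ openOrthant s) : c • x ∈ openOrthant s := by
  intro i
  have := mul_pos hc (hx i)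
  simp only [Pi.smul_apply, smul_eq_mul]
  linarith

lemma add_mem_openOrthant {n : ℕ} {s : Fin n → ℤ} {x y : Fin n → ℝ}
    (hx : x ∈ openOrthant s) (hy : y ∈ openOrthant s) : x + y ∈ openOrthant s := by
  intro i
  have := add_pos (hx i) (hy i)
  simp only [Pi.add_apply]
  linarith

lemma isOpen_thickCone {n : ℕ} (S : AddSubmonoid (Fin n → ℤ)) (s : Fin n → ℤ) :
    IsOpen (thickCone S s) := by
  have : thickCone S s = ⋃ (N : ℕ) (_ : 0 < N) (v ∈ S),
      (fun x : Fin n → ℝ => (N : ℝ) • x - latticeVec v) ⁻¹' openOrthant s := by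
    ext x
    simp [thickCone]
  rw [this]
  exact isOpen_iUnion fun N => isOpen_iUnion fun _ => isOpen_iUnion fun v => isOpen_iUnion fun _ =>
    (isOpen_openOrthant s).preimage (by fun_prop)

lemma add_mem_thickCone {n : ℕ} {S : AddSubmonoid (Fin n → ℤ)} {s : Fin n → ℤ}
    {x y : Fin n → ℝ} (hx : x ∈ thickCone S s) (hy : y ∈ thickCone S s) :
    x + y ∈ thickCone S s := by
  obtain ⟨N, hN, v, hv, hxv⟩ := hx
  obtain ⟨M, hM, w, hw, hyw⟩ := hy
  refine ⟨N * M, Nat.mul_pos hN hM, M • v + N • w,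
    S.add_mem (S.nsmul_mem hv M) (S.nsmul_mem hw N), ?_⟩
  have h := add_mem_openOrthant (smul_mem_openOrthant (Nat.cast_pos.2 hM) hxv)
    (smul_mem_openOrthant (Nat.cast_pos.2 hN) hyw)
  convert h using 1
  ext i
  simp [latticeVec]
  ring

lemma smul_mem_thickCone {n : ℕ} {S : AddSubmonoid (Fin n → ℤ)} {s : Fin n → ℤ}
    {x : Fin n → ℝ} (hx : x ∈ thickCone S s) {t : ℝ} (ht : 0 < t) :
    t • x ∈ thickCone S s := by
  obtain ⟨N, hN, v, hv, hxv⟩ := hx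
  have hN' : (0 : ℝ) < N := Nat.cast_pos.2 hN
  -- The admissible multiples `c` of `v` form an open set containing `t / N`, hence a rational.
  have hopen : IsOpen ({c : ℝ | t • x - c • latticeVec v ∈ openOrthant s} ∩ Set.Ioi 0) :=
    ((isOpen_openOrthant s).preimage
      (f := fun c : ℝ => t • x - c • latticeVec v) (by fun_prop)).inter isOpen_Ioi
  obtain ⟨q, hq, hq0⟩ := Rat.denseRange_cast (𝕜 := ℝ) |>.exists_mem_open hopen ⟨t / N, by
    have h := smul_mem_openOrthant (div_pos ht hN') hxv
    rw [smul_sub, smul_smul, div_mul_cancel₀ _ hN'.ne'] at h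
    exact h, div_pos ht hN'⟩
  have hq0' : 0 < q := Rat.cast_pos.1 (Set.mem_Ioi.1 hq0)
  have hd : (0 : ℝ) < q.den := Nat.cast_pos.2 q.den_pos
  refine ⟨q.den, q.den_pos, q.num.toNat • v, S.nsmul_mem hv _, ?_⟩
  have h := smul_mem_openOrthant hd hq
  convert h using 1
  have hnum : ((q.num.toNat : ℕ) : ℝ) = q.den * (q : ℝ) := by
    have h1 : ((q.num.toNat : ℕ) : ℤ) = q.num := Int.toNat_of_nonneg (Rat.num_pos.2 hq0').le
    have h2 : ((q.num.toNat : ℕ) : ℝ) = (q.num : ℝ) := by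
      exact_mod_cast congrArg (Int.cast (R := ℝ)) h1
    rw [h2]
    exact_mod_cast (Rat.den_mul_eq_num q).symm
  generalize q.num.toNat = k at hnum ⊢
  ext i
  simp [latticeVec, hnum]
  ring

lemma convex_thickCone {n : ℕ} (S : AddSubmonoid (Fin n → ℤ)) (s : Fin n → ℤ) :
    Convex ℝ (thickCone S s) :=
  convex_iff_forall_pos.2 fun _ hx _ hy _ _ ha hb _ =>
    add_mem_thickCone (smul_mem_thickCone hx ha) (smul_mem_thickCone hy hb)

lemma mem_of_latticeVec_mem_openOrthant {n : ℕ} {S : AddSubmonoid (Fin n → ℤ)} {s : Fin n → ℤ}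
    (hs : ∀ i, s i = 1 ∨ s i = -1) (hS : ∀ i, Pi.single i (s i) ∈ S) {v : Fin n → ℤ}
    (hv : latticeVec v ∈ openOrthant s) : v ∈ S := by
  rw [← Finset.univ_sum_single v]
  refine S.sum_mem fun i _ => ?_
  have hpos : 0 < s i * v i := by
    have h : (0 : ℝ) < (s i : ℝ) * (v i : ℝ) := hv i
    exact_mod_cast h
  have h : Pi.single i (v i) = (s i * v i).toNat • (Pi.single i (s i) : Fin n → ℤ) := by
    rw [← Pi.single_smul, nsmul_eq_mul, Int.toNat_of_nonneg hpos.le]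
    rcases hs i with h | h <;> simp [h]
  rw [h]
  exact S.nsmul_mem (hS i) _

lemma exists_functional_nonneg {n : ℕ} (hn : 1 ≤ n) (S : AddSubmonoid (Fin n → ℤ))
    (htotal : ∀ v, v ∈ S ∨ -v ∈ S) (hpointed : ∀ v ∈ S, -v ∈ S → v = 0) :
    ∃ φ : (Fin n → ℝ) →ₗ[ℝ] ℝ, φ ≠ 0 ∧ ∀ v ∈ S, 0 ≤ φ (latticeVec v) := by
  have hsign : ∀ i : Fin n, ∃ c : ℤ, (c = 1 ∨ c = -1) ∧ Pi.single i c ∈ S := fun i => by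
    rcases htotal (Pi.single i 1) with h | h
    · exact ⟨1, Or.inl rfl, h⟩
    · exact ⟨-1, Or.inr rfl, by rwa [Pi.single_neg]⟩
  choose s hs hsS using hsign
  have h0 : (0 : Fin n → ℝ) ∉ thickCone S s := by
    rintro ⟨N, -, v, hv, hO⟩
    have hneg : latticeVec (-v) ∈ openOrthant s := by
      convert hO using 1
      ext i
      simp [latticeVec]
    have hv0 := hpointed v hv (mem_of_latticeVec_mem_openOrthant hs hsS hneg)
    simpa [hv0, latticeVec] using hneg ⟨0, hn⟩
  obtain ⟨f, hf⟩ := geometric_hahn_banach_point_open (convex_thickCone S s)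
    (isOpen_thickCone S s) h0
  simp only [map_zero] at hf
  have hsO : latticeVec s ∈ openOrthant s := fun i => by
    rcases hs i with h | h <;> simp [latticeVec, h]
  refine ⟨f.toLinearMap, fun hf0 => ?_, fun v hv => ?_⟩
  · have hpos := hf (latticeVec s) ⟨1, one_pos, 0, S.zero_mem, by
      convert hsO using 1
      ext i
      simp [latticeVec]⟩
    have : f (latticeVec s) = 0 := LinearMap.congr_fun hf0 (latticeVec s)
    linarith
  · -- `v + t s ∈ Q` for every `t > 0`; let `t` tend to `0`.
    have hpert : ∀ t : ℝ, 0 < t → 0 < f (latticeVec v) + t * f (latticeVec s) := fun t ht => by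
      have := hf (latticeVec v + t • latticeVec s) ⟨1, one_pos, v, hv, by
        simpa using smul_mem_openOrthant ht hsO⟩
      simpa using this
    have hlim : Filter.Tendsto (fun t : ℝ => f (latticeVec v) + t * f (latticeVec s))
        (nhdsWithin 0 (Set.Ioi 0)) (nhds (f (latticeVec v))) := by
      have hc : Continuous fun t : ℝ => f (latticeVec v) + t * f (latticeVec s) := by fun_prop
      simpa using (hc.tendsto 0).mono_left nhdsWithin_le_nhds
    exact ge_of_tendsto hlim
      (by filter_upwards [self_mem_nhdsWithin] with t ht using (hpert t ht).le)

/-- Let `<` be a translation-invariant linear order on `ℤⁿ` (`n ≥ 1`).  Then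
there is a nonzero linear functional `φ : ℝⁿ → ℝ` such that for every
`v ∈ ℤⁿ`: if `φ(v) > 0` then `0 < v`, and if `φ(v) < 0` then `v < 0`. -/
theorem stmt8 (n : ℕ) (hn : 1 ≤ n) (r : (Fin n → ℤ) → (Fin n → ℤ) → Prop)
    (hlin : IsStrictTotalOrder (Fin n → ℤ) r)
    (hinv : ∀ a b c : Fin n → ℤ, r a b → r (a + c) (b + c)) :
    ∃ φ : (Fin n → ℝ) →ₗ[ℝ] ℝ, φ ≠ 0 ∧
      ∀ v : Fin n → ℤ,
        (0 < φ (fun i => (v i : ℝ)) → r 0 v) ∧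
        (φ (fun i => (v i : ℝ)) < 0 → r v 0) := by
  have htrans : ∀ {a b c}, r a b → r b c → r a c := fun h₁ h₂ => _root_.trans h₁ h₂
  have hirr : ∀ a, ¬ r a a := fun a => irrefl a
  have hneg : ∀ {v}, r v 0 → r 0 (-v) := fun {v} h => by simpa using hinv v 0 (-v) h
  have hneg' : ∀ {v}, r 0 (-v) → r v 0 := fun {v} h => by simpa using hinv 0 (-v) v h
  have htri : ∀ v, r 0 v ∨ 0 = v ∨ r v 0 := fun v => trichotomous_of r 0 v
  let S : AddSubmonoid (Fin n → ℤ) :=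
    { carrier := {v | v = 0 ∨ r 0 v}
      zero_mem' := Or.inl rfl
      add_mem' := by
        rintro a b (rfl | ha) (rfl | hb)
        · exact Or.inl (add_zero 0)
        · exact Or.inr (by simpa using hb)
        · exact Or.inr (by simpa using ha)
        · exact Or.inr (htrans hb (by simpa using hinv 0 a b ha)) }
  obtain ⟨φ, hφ, hpos⟩ := exists_functional_nonneg hn S
    (fun v => by
      rcases htri v with h | h | h
      · exact Or.inl (Or.inr h)
      · exact Or.inl (Or.inl h.symm)
      · exact Or.inr (Or.inr (hneg h)))
    (by
      rintro v (h | h) (h' | h')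
      · exact h
      · exact h
      · exact neg_eq_zero.1 h'
      · exact absurd (htrans h (hneg' h')) (hirr 0))
  refine ⟨φ, hφ, fun v => ⟨fun h => ?_, fun h => ?_⟩⟩
  · rcases htri v with h1 | rfl | h1
    · exact h1
    · exact absurd h (by simp [← Pi.zero_def])
    · have h2 := hpos (-v) (Or.inr (hneg h1))
      have h3 : latticeVec (-v) = -(fun i => (v i : ℝ)) := by ext i; simp [latticeVec]
      rw [h3, map_neg] at h2
      linarith
  · rcases htri v with h1 | rfl | h1
    · exact absurd (hpos v (Or.inr h1)) (not_le.2 h)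
    · exact absurd h (by simp [← Pi.zero_def])
    · exact h1
end
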